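/- arXiv:2503.23336 — 12 statements merged into one kernel-verified Lean document; each statement's English description precedes it below -/
import Mathlib

section
/- Let 𝔙, 𝔥 ∈ ℝ. Define the vector fields v, h : ℝ² → ℝ² by v(x₁,x₂) = 𝔙·(−x₂, x₁) and h(x₁,x₂) = 𝔥·(−x₂, x₁), and the scalar function p : ℝ² → ℝ by p(x) = ((𝔙² − 𝔥²)/2)·(x₁² + x₂² − 1). Then: (i) div v = 0 and div h = 0 everywhere on ℝ²; (ii) (v·∇)v + ∇p = (h·∇)h everywhere on ℝ²; (iii) v(x)·x = 0 and h(x)·x = 0 for every x ∈ ℝ², so v and h are tangential to every circle centered at the origin; (iv) p(x) = 0 whenever ‖x‖ = 1; and (v) for every x with ‖x‖ = 1, the outward normal derivative ∇p(x)·x equals 𝔙² − 𝔥². In particular (v, h, p) is a stationary solution of the ideal incompressible MHD equations on the unit disk with zero pressure on the boundary, and the Rayleigh–Taylor quantity −∇_n p on the unit circle equals 𝔥² − 𝔙² (the Rayleigh–Taylor sign condition holds iff 𝔥² > 𝔙²). -/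
/-- First partial derivative of a scalar function on `ℝ²`. -/
noncomputable def pd1 (f : ℝ × ℝ → ℝ) (x : ℝ × ℝ) : ℝ := fderiv ℝ f x (1, 0)

/-- Second partial derivative of a scalar function on `ℝ²`. -/
noncomputable def pd2 (f : ℝ × ℝ → ℝ) (x : ℝ × ℝ) : ℝ := fderiv ℝ f x (0, 1)

theorem pd_of_hasFDerivAt {f : ℝ × ℝ → ℝ} {L : ℝ × ℝ →L[ℝ] ℝ} {x : ℝ × ℝ}
    (hf : HasFDerivAt f L x) : pd1 f x = L (1, 0) ∧ pd2 f x = L (0, 1) := by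
  simp [pd1, pd2, hf.fderiv]

theorem pd_lin_fst (c : ℝ) (x : ℝ × ℝ) :
    pd1 (fun y => c * y.1) x = c ∧ pd2 (fun y => c * y.1) x = 0 := by
  have h1 : HasFDerivAt (fun y : ℝ × ℝ => y.1) (ContinuousLinearMap.fst ℝ ℝ ℝ) x := hasFDerivAt_fst
  have := pd_of_hasFDerivAt (h1.const_mul c)
  simpa using this

theorem pd_lin_snd (c : ℝ) (x : ℝ × ℝ) :
    pd1 (fun y => -(c * y.2)) x = 0 ∧ pd2 (fun y => -(c * y.2)) x = -c := by
  have h1 : HasFDerivAt (fun y : ℝ × ℝ => y.2) (ContinuousLinearMap.snd ℝ ℝ ℝ) x := hasFDerivAt_snd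
  have := pd_of_hasFDerivAt (h1.const_mul c).fun_neg
  simpa using this

theorem pd_quad (c : ℝ) (x : ℝ × ℝ) :
    pd1 (fun y => c * (y.1 ^ 2 + y.2 ^ 2 - 1)) x = c * (2 * x.1) ∧
    pd2 (fun y => c * (y.1 ^ 2 + y.2 ^ 2 - 1)) x = c * (2 * x.2) := by
  have h1 : HasFDerivAt (fun y : ℝ × ℝ => y.1) (ContinuousLinearMap.fst ℝ ℝ ℝ) x := hasFDerivAt_fst
  have h2 : HasFDerivAt (fun y : ℝ × ℝ => y.2) (ContinuousLinearMap.snd ℝ ℝ ℝ) x := hasFDerivAt_snd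
  have := pd_of_hasFDerivAt ((((h1.pow 2).fun_add (h2.pow 2)).sub_const 1).const_mul c)
  simpa using this

/-- The circular flow `v = 𝔙·(−x₂, x₁)`, magnetic field `h = 𝔥·(−x₂, x₁)`, and effective
pressure `p = ((𝔙² − 𝔥²)/2)(x₁² + x₂² − 1)` form a stationary solution of the ideal
incompressible MHD equations on the unit disk: both fields are divergence free,
`(v·∇)v + ∇p = (h·∇)h`, both fields are tangential to every circle centered at the origin,
`p` vanishes on the unit circle, and the outward normal derivative `∇p·x` on the unit circle
equals `𝔙² − 𝔥²`. -/
theorem stationary_circular_MHD_solution (𝔙 𝔥 : ℝ)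
    (v h : ℝ × ℝ → ℝ × ℝ) (p : ℝ × ℝ → ℝ)
    (hv : ∀ x, v x = (-(𝔙 * x.2), 𝔙 * x.1))
    (hh : ∀ x, h x = (-(𝔥 * x.2), 𝔥 * x.1))
    (hp : ∀ x, p x = ((𝔙 ^ 2 - 𝔥 ^ 2) / 2) * (x.1 ^ 2 + x.2 ^ 2 - 1)) :
    -- (i) div v = 0 and div h = 0
    (∀ x, pd1 (fun y => (v y).1) x + pd2 (fun y => (v y).2) x = 0) ∧
    (∀ x, pd1 (fun y => (h y).1) x + pd2 (fun y => (h y).2) x = 0) ∧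
    -- (ii) (v·∇)v + ∇p = (h·∇)h, componentwise
    (∀ x, (v x).1 * pd1 (fun y => (v y).1) x + (v x).2 * pd2 (fun y => (v y).1) x + pd1 p x
        = (h x).1 * pd1 (fun y => (h y).1) x + (h x).2 * pd2 (fun y => (h y).1) x) ∧
    (∀ x, (v x).1 * pd1 (fun y => (v y).2) x + (v x).2 * pd2 (fun y => (v y).2) x + pd2 p x
        = (h x).1 * pd1 (fun y => (h y).2) x + (h x).2 * pd2 (fun y => (h y).2) x) ∧
    -- (iii) v and h are tangential to circles centered at the origin
    (∀ x : ℝ × ℝ, (v x).1 * x.1 + (v x).2 * x.2 = 0) ∧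
    (∀ x : ℝ × ℝ, (h x).1 * x.1 + (h x).2 * x.2 = 0) ∧
    -- (iv) p vanishes on the unit circle
    (∀ x : ℝ × ℝ, x.1 ^ 2 + x.2 ^ 2 = 1 → p x = 0) ∧
    -- (v) the outward normal derivative of p on the unit circle equals 𝔙² − 𝔥²
    (∀ x : ℝ × ℝ, x.1 ^ 2 + x.2 ^ 2 = 1 →
      pd1 p x * x.1 + pd2 p x * x.2 = 𝔙 ^ 2 - 𝔥 ^ 2) := by
  obtain rfl : v = fun x => (-(𝔙 * x.2), 𝔙 * x.1) := funext hv
  obtain rfl : h = fun x => (-(𝔥 * x.2), 𝔥 * x.1) := funext hh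
  obtain rfl : p = fun x => ((𝔙 ^ 2 - 𝔥 ^ 2) / 2) * (x.1 ^ 2 + x.2 ^ 2 - 1) := funext hp
  simp only [(pd_lin_fst _ _).1, (pd_lin_fst _ _).2, (pd_lin_snd _ _).1, (pd_lin_snd _ _).2,
    (pd_quad _ _).1, (pd_quad _ _).2]
  refine ⟨fun x => by ring, fun x => by ring, fun x => by ring, fun x => by ring,
    fun x => by ring, fun x => by ring, fun x hx => by rw [hx]; ring, fun x hx => ?_⟩
  linear_combination (𝔙 ^ 2 - 𝔥 ^ 2) * hx
end

section
/- Let α, 𝔥, 𝔙 ∈ ℝ with α ≥ 0, and let k ∈ ℝ with k > 1. Consider the dispersion relation (k : ℂ)·(c − ((k−1)/k)·𝔙)² = ((k−1) : ℂ)·(α(k+1) + 𝔥² − 𝔙²/k) for c ∈ ℂ. Then every complex solution c of this equation is real if and only if α(k+1) + 𝔥² ≥ 𝔙²/k; equivalently, there exists a solution c with nonzero imaginary part (an unstable k-wave) if and only if α(k+1) + 𝔥² < 𝔙²/k. -/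
theorem exists_nonreal_root_iff (k m a D : ℝ) (hk : 0 < k) (hm : 0 < m) :
    (∃ c : ℂ, (k : ℂ) * (c - (a : ℂ)) ^ 2 = (m : ℂ) * (D : ℂ) ∧ c.im ≠ 0) ↔ D < 0 := by
  constructor
  · rintro ⟨c, hc, hi⟩
    have hre := congrArg Complex.re hc
    have him := congrArg Complex.im hc
    simp [pow_two] at hre him
    have hx : c.re - a = 0 := by
      have h2 : (k * c.im) * (c.re - a) = 0 := by
        rcases him with h | h
        · exact absurd h hk.ne'
        · linear_combination k / 2 * h
      exact (mul_eq_zero.mp h2).resolve_left (mul_ne_zero hk.ne' hi)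
    rw [hx] at hre
    have hp : 0 < k * (c.im * c.im) := mul_pos hk (mul_self_pos.mpr hi)
    by_contra hD
    have := mul_nonneg hm.le (not_lt.mp hD)
    linarith
  · intro hD
    have hpos : 0 < m * (-D) / k := div_pos (mul_pos hm (by linarith)) hk
    refine ⟨a + Real.sqrt (m * (-D) / k) * Complex.I, ?_, ?_⟩
    · have hs : k * Real.sqrt (m * (-D) / k) ^ 2 = m * (-D) := by
        rw [Real.sq_sqrt hpos.le]; field_simp
      have hs' : (k : ℂ) * (Real.sqrt (m * (-D) / k) : ℂ) ^ 2 = m * (-D) := by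
        exact_mod_cast hs
      rw [add_sub_cancel_left, mul_pow, Complex.I_sq]
      linear_combination -hs'
    · simpa using (Real.sqrt_pos.mpr hpos).ne'

/-- Stability criterion from the dispersion relation
`k(c − ((k−1)/k)𝔙)² = (k−1)(α(k+1) + 𝔥² − 𝔙²/k)` for a `k`-wave (`k > 1`, `α ≥ 0`):
every complex root `c` is real iff `α(k+1) + 𝔥² ≥ 𝔙²/k`, and there is a root with nonzero
imaginary part (an unstable wave) iff `α(k+1) + 𝔥² < 𝔙²/k`. -/
theorem dispersion_stability_criterion (α 𝔥 𝔙 k : ℝ) (hα : 0 ≤ α) (hk : 1 < k) :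
    ((∀ c : ℂ,
        (k : ℂ) * (c - (((k - 1) / k * 𝔙 : ℝ) : ℂ)) ^ 2
          = ((k - 1 : ℝ) : ℂ) * ((α * (k + 1) + 𝔥 ^ 2 - 𝔙 ^ 2 / k : ℝ) : ℂ) →
        c.im = 0) ↔ 𝔙 ^ 2 / k ≤ α * (k + 1) + 𝔥 ^ 2) ∧
    ((∃ c : ℂ,
        (k : ℂ) * (c - (((k - 1) / k * 𝔙 : ℝ) : ℂ)) ^ 2
          = ((k - 1 : ℝ) : ℂ) * ((α * (k + 1) + 𝔥 ^ 2 - 𝔙 ^ 2 / k : ℝ) : ℂ) ∧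
        c.im ≠ 0) ↔ α * (k + 1) + 𝔥 ^ 2 < 𝔙 ^ 2 / k) := by
  have h := exists_nonreal_root_iff k (k - 1) ((k - 1) / k * 𝔙)
    (α * (k + 1) + 𝔥 ^ 2 - 𝔙 ^ 2 / k) (by linarith) (by linarith)
  rw [sub_neg] at h
  refine ⟨?_, h⟩
  rw [← not_lt, ← h]
  push Not
  rfl
end

section
/- Let 𝔙 ∈ ℝ with 𝔙 ≠ 0 and let k ∈ ℝ with k > 1. Then the set of complex numbers c satisfying (k : ℂ)·(c − ((k−1)/k)·𝔙)² = −((k−1) : ℂ)·𝔙²/k is exactly { ((k−1)/k)𝔙 + i·(√(k−1)/k)·𝔙 , ((k−1)/k)𝔙 − i·(√(k−1)/k)·𝔙 }, and every element of this set has nonzero imaginary part. In other words, for the free-boundary problem with zero surface tension and zero magnetic field, every perturbing wave with wave number k > 1 is unstable. -/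
/-- Rayleigh–Taylor instability for rotating flows without surface tension and without
magnetic field: for `𝔙 ≠ 0` and `k > 1`, the roots of the dispersion relation
`k(c − ((k−1)/k)𝔙)² = −(k−1)𝔙²/k` are exactly `((k−1)/k)𝔙 ± i(√(k−1)/k)𝔙`, and each of
them has nonzero imaginary part: every perturbing `k`-wave with `k > 1` is unstable. -/
theorem rayleigh_taylor_all_waves_unstable (𝔙 k : ℝ) (h𝔙 : 𝔙 ≠ 0) (hk : 1 < k) :
    ({c : ℂ |
        (k : ℂ) * (c - (((k - 1) / k * 𝔙 : ℝ) : ℂ)) ^ 2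
          = -(((k - 1) * 𝔙 ^ 2 / k : ℝ) : ℂ)} : Set ℂ)
      = {(((k - 1) / k * 𝔙 : ℝ) : ℂ) + Complex.I * ((Real.sqrt (k - 1) / k * 𝔙 : ℝ) : ℂ),
         (((k - 1) / k * 𝔙 : ℝ) : ℂ) - Complex.I * ((Real.sqrt (k - 1) / k * 𝔙 : ℝ) : ℂ)} ∧
    (∀ c : ℂ,
      (k : ℂ) * (c - (((k - 1) / k * 𝔙 : ℝ) : ℂ)) ^ 2
        = -(((k - 1) * 𝔙 ^ 2 / k : ℝ) : ℂ) → c.im ≠ 0) := by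
  have hk0 : k ≠ 0 := by linarith
  have hs : 0 < Real.sqrt (k - 1) := Real.sqrt_pos.mpr (by linarith)
  have hb0 : Real.sqrt (k - 1) / k * 𝔙 ≠ 0 := mul_ne_zero (div_ne_zero hs.ne' hk0) h𝔙
  have hb : (k - 1) * 𝔙 ^ 2 / k = k * (Real.sqrt (k - 1) / k * 𝔙) ^ 2 := by
    rw [mul_pow, div_pow, Real.sq_sqrt (by linarith)]
    field_simp
  rw [hb]
  generalize Real.sqrt (k - 1) / k * 𝔙 = b at hb0
  generalize (k - 1) / k * 𝔙 = a
  have hkC : (k : ℂ) ≠ 0 := by exact_mod_cast hk0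
  have key : ∀ c : ℂ, (k : ℂ) * (c - (a : ℂ)) ^ 2 = -((k * b ^ 2 : ℝ) : ℂ) ↔
      c = (a : ℂ) + Complex.I * (b : ℂ) ∨ c = (a : ℂ) - Complex.I * (b : ℂ) := by
    intro c
    constructor
    · intro h
      push_cast at h
      have h2 : (k : ℂ) * ((c - (a + Complex.I * b)) * (c - (a - Complex.I * b))) = 0 := by
        linear_combination h - (k : ℂ) * b ^ 2 * Complex.I_sq
      rcases mul_eq_zero.mp ((mul_eq_zero.mp h2).resolve_left hkC) with h3 | h3
      · exact Or.inl (sub_eq_zero.mp h3)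
      · exact Or.inr (sub_eq_zero.mp h3)
    · rintro (rfl | rfl) <;> push_cast <;>
        linear_combination (k : ℂ) * b ^ 2 * Complex.I_sq
  refine ⟨?_, ?_⟩
  · ext c
    simpa using key c
  · intro c hc
    rcases (key c).mp hc with rfl | rfl <;> simpa using hb0
end

section
/- Let 𝔙, 𝔥 ∈ ℝ with 𝔥 ≠ 0, and set α = 0. Then for every real k with k > 1 and k·𝔥² ≥ 𝔙², every complex number c satisfying (k : ℂ)·(c − ((k−1)/k)·𝔙)² = ((k−1) : ℂ)·(𝔥² − 𝔙²/k) is real. In particular, all perturbing waves with wave numbers k ≥ max(1, 𝔙²/𝔥²) are stable: a non-degenerate tangential magnetic field, no matter how small, stabilizes all sufficiently large interfacial waves even without surface tension. -/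
/-- Stabilization by a non-degenerate tangential magnetic field without surface tension
(`α = 0`): if `𝔥 ≠ 0`, then for every wave number `k > 1` with `k𝔥² ≥ 𝔙²`, every root `c` of
the dispersion relation `k(c − ((k−1)/k)𝔙)² = (k−1)(𝔥² − 𝔙²/k)` is real, i.e. all
sufficiently large interfacial waves are stable. -/
theorem magnetic_field_stabilizes_large_waves (𝔙 𝔥 : ℝ) (h𝔥 : 𝔥 ≠ 0) :
    ∀ k : ℝ, 1 < k → 𝔙 ^ 2 ≤ k * 𝔥 ^ 2 →
      ∀ c : ℂ,
        (k : ℂ) * (c - (((k - 1) / k * 𝔙 : ℝ) : ℂ)) ^ 2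
          = ((k - 1 : ℝ) : ℂ) * ((𝔥 ^ 2 - 𝔙 ^ 2 / k : ℝ) : ℂ) →
        c.im = 0 := by
  intro k hk hV c hc
  have hk0 : 0 < k := by linarith
  have hR : 0 ≤ (k - 1) * (𝔥 ^ 2 - 𝔙 ^ 2 / k) := by
    apply mul_nonneg (by linarith)
    rw [sub_nonneg, div_le_iff₀ hk0]
    linarith
  rw [← Complex.ofReal_mul] at hc
  generalize (k - 1) * (𝔥 ^ 2 - 𝔙 ^ 2 / k) = R at hc hR
  generalize (k - 1) / k * 𝔙 = a at hc
  have h1 := congrArg Complex.re hc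
  have h2 := congrArg Complex.im hc
  simp only [pow_two, Complex.mul_re, Complex.mul_im, Complex.sub_re, Complex.sub_im,
    Complex.ofReal_re, Complex.ofReal_im, sub_zero, zero_mul, add_zero] at h1 h2
  by_contra hy
  have h3 : (k * c.im) * (c.re - a) = 0 := by linarith
  have h4 : c.re - a = 0 := (mul_eq_zero.mp h3).resolve_left (mul_ne_zero hk0.ne' hy)
  rw [h4] at h1
  have h5 : 0 < k * (c.im * c.im) := mul_pos hk0 (mul_self_pos.mpr hy)
  linarith
end

section
/- Let α, 𝔥, 𝔙 ∈ ℝ with α > 0. Then for every real k with k > 1 and α·k ≥ 𝔙², every complex number c satisfying (k : ℂ)·(c − ((k−1)/k)·𝔙)² = ((k−1) : ℂ)·(α(k+1) + 𝔥² − 𝔙²/k) is real. In particular, in the presence of surface tension all perturbing waves with sufficiently large wave numbers are stable, regardless of the magnetic field strength 𝔥. -/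
/-- Stabilization by surface tension: if `α > 0`, then for every wave number `k > 1` with
`αk ≥ 𝔙²`, every root `c` of the dispersion relation
`k(c − ((k−1)/k)𝔙)² = (k−1)(α(k+1) + 𝔥² − 𝔙²/k)` is real, i.e. in the presence of surface
tension all perturbing waves with sufficiently large wave numbers are stable, regardless of
the magnetic field strength `𝔥`. -/
theorem surface_tension_stabilizes_large_waves (α 𝔥 𝔙 : ℝ) (hα : 0 < α) :
    ∀ k : ℝ, 1 < k → 𝔙 ^ 2 ≤ α * k →
      ∀ c : ℂ,
        (k : ℂ) * (c - (((k - 1) / k * 𝔙 : ℝ) : ℂ)) ^ 2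
          = ((k - 1 : ℝ) : ℂ) * ((α * (k + 1) + 𝔥 ^ 2 - 𝔙 ^ 2 / k : ℝ) : ℂ) →
        c.im = 0 := by
  intro k hk hV c hc
  have hk0 : 0 < k := by linarith
  have h1 : 𝔙 ^ 2 / k ≤ α := (div_le_iff₀ hk0).2 hV
  have hpos : 0 < (k - 1) * (α * (k + 1) + 𝔥 ^ 2 - 𝔙 ^ 2 / k) := by
    apply mul_pos (by linarith)
    nlinarith [mul_pos hα hk0, sq_nonneg 𝔥]
  generalize (k - 1) / k * 𝔙 = a at hc
  rw [← Complex.ofReal_mul] at hc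
  generalize (k - 1) * (α * (k + 1) + 𝔥 ^ 2 - 𝔙 ^ 2 / k) = R at hc hpos
  have hre := congrArg Complex.re hc
  have him := congrArg Complex.im hc
  simp only [pow_two, Complex.re_ofReal_mul, Complex.im_ofReal_mul, Complex.mul_re,
    Complex.mul_im, Complex.sub_re, Complex.sub_im, Complex.ofReal_re, Complex.ofReal_im,
    sub_zero] at hre him
  by_contra hne
  have h2 : (k * 2 * c.im) * (c.re - a) = 0 := by linarith
  have h3 : c.re - a = 0 := by
    rcases mul_eq_zero.1 h2 with h | h
    · exact absurd h (by positivity)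
    · exact h
  rw [h3] at hre
  nlinarith [mul_nonneg hk0.le (mul_self_nonneg c.im)]
end

section
/- Let γ : ℝ × ℝ → ℝ² be a smooth family of regular plane curves with speed σ(t,s) := ‖∂_s γ(t,s)‖ > 0, unit tangent τ := σ⁻¹∂_sγ, unit normal n := (τ², −τ¹), and evolution velocity u := ∂_t γ. Then for all (t,s): ∂_t τ(t,s) = ( (σ⁻¹∂_s u)(t,s) · n(t,s) ) · n(t,s). -/
/-- Dot product on `ℝ²`. -/
def dotp (a b : ℝ × ℝ) : ℝ := a.1 * b.1 + a.2 * b.2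

/-- Partial derivative in the time variable of an `ℝ²`-valued function of `(t,s)`. -/
noncomputable def ptd (f : ℝ × ℝ → ℝ × ℝ) (q : ℝ × ℝ) : ℝ × ℝ :=
  deriv (fun t => f (t, q.2)) q.1

/-- Partial derivative in the parameter variable of an `ℝ²`-valued function of `(t,s)`. -/
noncomputable def psd (f : ℝ × ℝ → ℝ × ℝ) (q : ℝ × ℝ) : ℝ × ℝ :=
  deriv (fun s => f (q.1, s)) q.2

theorem psd_eq_fderiv (γ : ℝ × ℝ → ℝ × ℝ) (hγ : ContDiff ℝ (⊤ : ℕ∞) γ) (q : ℝ × ℝ) :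
    psd γ q = fderiv ℝ γ q (0, 1) := by
  have h1 : HasFDerivAt γ (fderiv ℝ γ q) (q.1, q.2) :=
    (hγ.differentiable (by simp) q).hasFDerivAt
  have h2 : HasDerivAt (fun s : ℝ => (q.1, s)) ((0 : ℝ), (1 : ℝ)) q.2 :=
    (hasDerivAt_const q.2 q.1).prodMk (hasDerivAt_id q.2)
  exact (h1.comp_hasDerivAt q.2 h2).deriv

theorem ptd_eq_fderiv (γ : ℝ × ℝ → ℝ × ℝ) (hγ : ContDiff ℝ (⊤ : ℕ∞) γ) (q : ℝ × ℝ) :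
    ptd γ q = fderiv ℝ γ q (1, 0) := by
  have h1 : HasFDerivAt γ (fderiv ℝ γ q) (q.1, q.2) :=
    (hγ.differentiable (by simp) q).hasFDerivAt
  have h2 : HasDerivAt (fun t : ℝ => (t, q.2)) ((1 : ℝ), (0 : ℝ)) q.1 :=
    (hasDerivAt_id q.1).prodMk (hasDerivAt_const q.1 q.2)
  exact (h1.comp_hasDerivAt q.1 h2).deriv

theorem hasDerivAt_psd (γ : ℝ × ℝ → ℝ × ℝ) (hγ : ContDiff ℝ (⊤ : ℕ∞) γ) (q : ℝ × ℝ) :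
    HasDerivAt (fun t => psd γ (t, q.2)) (psd (ptd γ) q) q.1 := by
  have hd : ContDiff ℝ (⊤ : ℕ∞) (fderiv ℝ γ) := hγ.fderiv_right (by simp)
  have hdd : Differentiable ℝ (fderiv ℝ γ) := hd.differentiable (by simp)
  have h1 : HasFDerivAt (fderiv ℝ γ) (fderiv ℝ (fderiv ℝ γ) q) (q.1, q.2) :=
    (hdd q).hasFDerivAt
  have ht : HasDerivAt (fun t : ℝ => (t, q.2)) ((1 : ℝ), (0 : ℝ)) q.1 :=
    (hasDerivAt_id q.1).prodMk (hasDerivAt_const q.1 q.2)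
  have hs : HasDerivAt (fun s : ℝ => (q.1, s)) ((0 : ℝ), (1 : ℝ)) q.2 :=
    (hasDerivAt_const q.2 q.1).prodMk (hasDerivAt_id q.2)
  have hsym : fderiv ℝ (fderiv ℝ γ) q (1, 0) (0, 1) = fderiv ℝ (fderiv ℝ γ) q (0, 1) (1, 0) :=
    second_derivative_symmetric (f := γ) (f' := fderiv ℝ γ) (x := q)
      (fun y => (hγ.differentiable (by simp) y).hasFDerivAt) h1 _ _
  have e1 : HasDerivAt (fun t => fderiv ℝ γ (t, q.2) (0, 1))
      (fderiv ℝ (fderiv ℝ γ) q (1, 0) (0, 1)) q.1 := by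
    exact (ContinuousLinearMap.apply ℝ (ℝ × ℝ) ((0 : ℝ), (1 : ℝ))).hasFDerivAt.comp_hasDerivAt q.1
      (h1.comp_hasDerivAt q.1 ht)
  have e2 : HasDerivAt (fun s => fderiv ℝ γ (q.1, s) (1, 0))
      (fderiv ℝ (fderiv ℝ γ) q (0, 1) (1, 0)) q.2 := by
    exact (ContinuousLinearMap.apply ℝ (ℝ × ℝ) ((1 : ℝ), (0 : ℝ))).hasFDerivAt.comp_hasDerivAt q.2
      (h1.comp_hasDerivAt q.2 hs)
  have e3 : psd (ptd γ) q = fderiv ℝ (fderiv ℝ γ) q (0, 1) (1, 0) := by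
    unfold psd
    simp only [ptd_eq_fderiv γ hγ]
    exact e2.deriv
  rw [e3, ← hsym]
  simp only [psd_eq_fderiv γ hγ]
  exact e1

/-- Evolution of the unit tangent of a moving regular plane curve: `𝒟_t τ = (∇_τ u · n) n`,
where `u = ∂_tγ` is the evolution velocity, `σ = ‖∂_sγ‖` the speed, `τ = σ⁻¹∂_sγ` the unit
tangent, and `n = (τ², −τ¹)` the unit normal. -/
theorem evolution_of_unit_tangent (γ : ℝ × ℝ → ℝ × ℝ) (hγ : ContDiff ℝ (⊤ : ℕ∞) γ)
    (σ : ℝ × ℝ → ℝ)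
    (hσ : ∀ q, σ q = Real.sqrt ((psd γ q).1 ^ 2 + (psd γ q).2 ^ 2))
    (hσpos : ∀ q, 0 < σ q)
    (τ n u : ℝ × ℝ → ℝ × ℝ)
    (hτ : ∀ q, τ q = (σ q)⁻¹ • psd γ q)
    (hn : ∀ q, n q = ((τ q).2, -(τ q).1))
    (hu : ∀ q, u q = ptd γ q) :
    ∀ q, ptd τ q = dotp ((σ q)⁻¹ • psd u q) (n q) • n q := by
  intro q
  have hu' : u = ptd γ := funext hu
  subst hu'
  have hp := hasDerivAt_psd γ hγ q
  generalize psd (ptd γ) q = w at hp ⊢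
  have hp1 : HasDerivAt (fun t => (psd γ (t, q.2)).1) w.1 q.1 :=
    (ContinuousLinearMap.fst ℝ ℝ ℝ).hasFDerivAt.comp_hasDerivAt q.1 hp
  have hp2 : HasDerivAt (fun t => (psd γ (t, q.2)).2) w.2 q.1 :=
    (ContinuousLinearMap.snd ℝ ℝ ℝ).hasFDerivAt.comp_hasDerivAt q.1 hp
  have h0 := hσpos q
  have hsq : σ q ^ 2 = (psd γ q).1 ^ 2 + (psd γ q).2 ^ 2 := by
    rw [hσ q, Real.sq_sqrt (by positivity)]
  have hne : (psd γ (q.1, q.2)).1 ^ 2 + (psd γ (q.1, q.2)).2 ^ 2 ≠ 0 := by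
    change (psd γ q).1 ^ 2 + (psd γ q).2 ^ 2 ≠ 0
    rw [← hsq]; positivity
  have hs := ((hp1.pow 2).add (hp2.pow 2)).sqrt hne
  have hs' : HasDerivAt (fun t => σ (t, q.2))
      (((psd γ q).1 * w.1 + (psd γ q).2 * w.2) / σ q) q.1 := by
    have hf : (fun t => σ (t, q.2)) =
        fun t => √((psd γ (t, q.2)).1 ^ 2 + (psd γ (t, q.2)).2 ^ 2) := funext fun t => hσ _
    rw [hf]
    refine HasDerivAt.congr_deriv hs (Eq.symm ?_)
    change _ = (((2 : ℕ) : ℝ) * (psd γ q).1 ^ (2 - 1) * w.1 + ((2 : ℕ) : ℝ) * (psd γ q).2 ^ (2 - 1) * w.2) /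
      (2 * √((psd γ q).1 ^ 2 + (psd γ q).2 ^ 2))
    rw [← hσ q]
    field_simp
    norm_num
    try ring
  have hi := hs'.inv (ne_of_gt (hσpos (q.1, q.2)))
  have ht := hi.smul hp
  have e : ptd τ q = (σ q)⁻¹ • w +
      (-(((psd γ q).1 * w.1 + (psd γ q).2 * w.2) / σ q) / σ q ^ 2) • psd γ q := by
    unfold ptd
    simp only [hτ]
    exact ht.deriv
  rw [e]
  simp only [hn, hτ, dotp, Pi.inv_apply, Prod.mk.eta]
  generalize psd γ q = p at *
  generalize σ q = r at *
  have hr : r ≠ 0 := h0.ne'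
  ext
  · simp only [Prod.fst_add, Prod.smul_fst, Prod.smul_snd, smul_eq_mul]
    field_simp
    linear_combination (w.1) * hsq
  · simp only [Prod.snd_add, Prod.smul_fst, Prod.smul_snd, smul_eq_mul]
    field_simp
    linear_combination (w.2) * hsq
end

section
/- Let γ : ℝ × ℝ → ℝ² be a smooth family of regular plane curves with speed σ(t,s) := ‖∂_s γ(t,s)‖ > 0, unit tangent τ := σ⁻¹∂_sγ, unit normal n := (τ², −τ¹), and evolution velocity u := ∂_t γ. Then for all (t,s): ∂_t n(t,s) = −( (σ⁻¹∂_s u)(t,s) · n(t,s) ) · τ(t,s). -/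
/-- Evolution of the unit normal of a moving regular plane curve:
`𝒟_t n = −(∇_τ u · n) τ`, where `u = ∂_tγ` is the evolution velocity, `σ = ‖∂_sγ‖` the
speed, `τ = σ⁻¹∂_sγ` the unit tangent, and `n = (τ², −τ¹)` the unit normal. -/
theorem evolution_of_unit_normal (γ : ℝ × ℝ → ℝ × ℝ) (hγ : ContDiff ℝ (⊤ : ℕ∞) γ)
    (σ : ℝ × ℝ → ℝ)
    (hσ : ∀ q, σ q = Real.sqrt ((psd γ q).1 ^ 2 + (psd γ q).2 ^ 2))
    (hσpos : ∀ q, 0 < σ q)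
    (τ n u : ℝ × ℝ → ℝ × ℝ)
    (hτ : ∀ q, τ q = (σ q)⁻¹ • psd γ q)
    (hn : ∀ q, n q = ((τ q).2, -(τ q).1))
    (hu : ∀ q, u q = ptd γ q) :
    ∀ q, ptd n q = (-(dotp ((σ q)⁻¹ • psd u q) (n q))) • τ q := by
  have hd : Differentiable ℝ γ := hγ.differentiable (by simp)
  have hd2 : Differentiable ℝ (fderiv ℝ γ) :=
    (hγ.fderiv_right (m := 1) (by norm_cast)).differentiable (by simp)
  have ht : ∀ q : ℝ × ℝ, HasDerivAt (fun t : ℝ => (t, q.2)) ((1 : ℝ), (0 : ℝ)) q.1 := fun q =>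
    (hasDerivAt_id q.1).prodMk (hasDerivAt_const q.1 q.2)
  have hs : ∀ q : ℝ × ℝ, HasDerivAt (fun s : ℝ => (q.1, s)) ((0 : ℝ), (1 : ℝ)) q.2 := fun q =>
    (hasDerivAt_const q.2 q.1).prodMk (hasDerivAt_id q.2)
  have hpt : ∀ q, ptd γ q = fderiv ℝ γ q (1, 0) := fun q =>
    ((hd q).hasFDerivAt.comp_hasDerivAt q.1 (ht q)).deriv
  have hps : ∀ q, psd γ q = fderiv ℝ γ q (0, 1) := fun q =>
    ((hd q).hasFDerivAt.comp_hasDerivAt q.2 (hs q)).deriv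
  intro q
  have hsym := second_derivative_symmetric (fun y => (hd y).hasFDerivAt)
    (hd2 q).hasFDerivAt (1, 0) (0, 1)
  have hus : psd u q = fderiv ℝ (fderiv ℝ γ) q (0, 1) (1, 0) := by
    have h1 : HasDerivAt (fun s => fderiv ℝ γ (q.1, s)) (fderiv ℝ (fderiv ℝ γ) q (0, 1)) q.2 :=
      (hd2 q).hasFDerivAt.comp_hasDerivAt q.2 (hs q)
    have h2 := h1.clm_apply (hasDerivAt_const q.2 ((1 : ℝ), (0 : ℝ)))
    have h3 : (fun s => u (q.1, s)) = fun s => fderiv ℝ γ (q.1, s) (1, 0) := by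
      funext s; rw [hu, hpt]
    unfold psd
    rw [h3, h2.deriv]; simp
  have hv : HasDerivAt (fun t => psd γ (t, q.2)) (psd u q) q.1 := by
    have h1 : HasDerivAt (fun t => fderiv ℝ γ (t, q.2)) (fderiv ℝ (fderiv ℝ γ) q (1, 0)) q.1 :=
      (hd2 q).hasFDerivAt.comp_hasDerivAt q.1 (ht q)
    have h2 := h1.clm_apply (hasDerivAt_const q.1 ((0 : ℝ), (1 : ℝ)))
    have h3 : (fun t => psd γ (t, q.2)) = fun t => fderiv ℝ γ (t, q.2) (0, 1) := by
      funext t; rw [hps]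
    rw [h3, hus, ← hsym]
    simpa using h2
  have ha : HasDerivAt (fun t => (psd γ (t, q.2)).1) (psd u q).1 q.1 :=
    (ContinuousLinearMap.fst ℝ ℝ ℝ).hasFDerivAt.comp_hasDerivAt q.1 hv
  have hb : HasDerivAt (fun t => (psd γ (t, q.2)).2) (psd u q).2 q.1 :=
    (ContinuousLinearMap.snd ℝ ℝ ℝ).hasFDerivAt.comp_hasDerivAt q.1 hv
  have hpos := hσpos q
  have hne : σ q ≠ 0 := hpos.ne'
  have hsq : σ q ^ 2 = (psd γ q).1 ^ 2 + (psd γ q).2 ^ 2 := by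
    rw [hσ q, Real.sq_sqrt (by positivity)]
  have hrad : (psd γ q).1 ^ 2 + (psd γ q).2 ^ 2 ≠ 0 := by rw [← hsq]; positivity
  have hσd : HasDerivAt (fun t => σ (t, q.2))
      (((psd γ q).1 * (psd u q).1 + (psd γ q).2 * (psd u q).2) / σ q) q.1 := by
    have h := ((ha.pow 2).add (hb.pow 2)).sqrt hrad
    have h3 : (fun t => σ (t, q.2)) =
        fun t => Real.sqrt ((psd γ (t, q.2)).1 ^ 2 + (psd γ (t, q.2)).2 ^ 2) := by
      funext t; rw [hσ]
    rw [h3]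
    refine h.congr_deriv ?_
    simp only [Pi.add_apply, Pi.pow_apply, Prod.mk.eta]
    rw [← hσ q]
    field_simp
    push_cast
    ring
  have hinv := hσd.fun_inv hne
  have hN := (hinv.fun_mul hb).prodMk (hinv.fun_mul ha).fun_neg
  have h3 : (fun t => n (t, q.2)) = fun t =>
      ((σ (t, q.2))⁻¹ * (psd γ (t, q.2)).2, -((σ (t, q.2))⁻¹ * (psd γ (t, q.2)).1)) := by
    funext t; rw [hn, hτ]; simp
  have hL := hN.deriv
  rw [← h3] at hL
  change ptd n q = _ at hL
  rw [hL, hn, hτ]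
  simp only [Prod.mk.eta]
  generalize (psd u q) = w at *
  generalize (psd γ q) = v at *
  generalize σ q = r at *
  obtain ⟨a, b⟩ := v
  obtain ⟨c, d⟩ := w
  simp only [dotp, Prod.smul_mk, smul_eq_mul] at *
  ext
  · field_simp
    linear_combination d * hsq
  · field_simp
    linear_combination (-c) * hsq
end

section
/- Let γ : ℝ × ℝ → ℝ² be a smooth family of regular plane curves with speed σ(t,s) := ‖∂_s γ(t,s)‖ > 0, unit tangent τ := σ⁻¹∂_sγ, and evolution velocity u := ∂_t γ. Then for every smooth function f : ℝ × ℝ → ℝ and all (t,s): ∂_t( σ⁻¹ ∂_s f )(t,s) − σ(t,s)⁻¹ ∂_s( ∂_t f )(t,s) = −( (σ⁻¹∂_s u)(t,s) · τ(t,s) ) · (σ⁻¹ ∂_s f)(t,s). That is, the commutator [𝒟_t, ∇_τ] equals −(∇_τ u · τ)∇_τ. -/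
/-- Partial derivative in the time variable of a scalar function of `(t,s)`. -/
noncomputable def ptds (f : ℝ × ℝ → ℝ) (q : ℝ × ℝ) : ℝ :=
  deriv (fun t => f (t, q.2)) q.1

/-- Partial derivative in the parameter variable of a scalar function of `(t,s)`. -/
noncomputable def psds (f : ℝ × ℝ → ℝ) (q : ℝ × ℝ) : ℝ :=
  deriv (fun s => f (q.1, s)) q.2

section helpers
variable {E : Type*} [NormedAddCommGroup E] [NormedSpace ℝ E]

theorem aux_two : (2 : WithTop ℕ∞) ≤ ((⊤ : ℕ∞) : WithTop ℕ∞) :=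
  WithTop.coe_le_coe.2 (le_top : (2 : ℕ∞) ≤ ⊤)

theorem aux_t {F : ℝ × ℝ → E} (hF : Differentiable ℝ F) (q : ℝ × ℝ) :
    HasDerivAt (fun t => F (t, q.2)) (fderiv ℝ F q (1, 0)) q.1 := by
  have h : HasFDerivAt F (fderiv ℝ F q) (q.1, q.2) := (hF q).hasFDerivAt
  exact h.comp_hasDerivAt q.1 ((hasDerivAt_id q.1).prodMk (hasDerivAt_const q.1 q.2))

theorem aux_s {F : ℝ × ℝ → E} (hF : Differentiable ℝ F) (q : ℝ × ℝ) :
    HasDerivAt (fun s => F (q.1, s)) (fderiv ℝ F q (0, 1)) q.2 := by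
  have h : HasFDerivAt F (fderiv ℝ F q) (q.1, q.2) := (hF q).hasFDerivAt
  exact h.comp_hasDerivAt q.2 ((hasDerivAt_const q.2 q.1).prodMk (hasDerivAt_id q.2))

theorem aux_diff {F : ℝ × ℝ → E} (hF : ContDiff ℝ (⊤ : ℕ∞) F) :
    Differentiable ℝ (fderiv ℝ F) :=
  (hF.fderiv_right (m := 1) (by rw [one_add_one_eq_two]; exact aux_two)).differentiable (by norm_num)

/-- The mixed derivatives exist and agree. -/
theorem aux_mixed {F : ℝ × ℝ → E} (hF : ContDiff ℝ (⊤ : ℕ∞) F) (q : ℝ × ℝ) :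
    ∃ m : E, HasDerivAt (fun t => deriv (fun s => F (t, s)) q.2) m q.1 ∧
      HasDerivAt (fun s => deriv (fun t => F (t, s)) q.1) m q.2 := by
  have hd : Differentiable ℝ F := hF.differentiable (by simp)
  have h1 : (fun t => deriv (fun s => F (t, s)) q.2) = fun t => fderiv ℝ F (t, q.2) (0, 1) := by
    funext t
    exact (aux_s hd (t, q.2)).deriv
  have h2 : (fun s => deriv (fun t => F (t, s)) q.1) = fun s => fderiv ℝ F (q.1, s) (1, 0) := by
    funext s
    exact (aux_t hd (q.1, s)).deriv
  have hsymm : IsSymmSndFDerivAt ℝ F q :=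
    hF.contDiffAt.isSymmSndFDerivAt (by simpa using aux_two)
  refine ⟨fderiv ℝ (fderiv ℝ F) q (1, 0) (0, 1), ?_, ?_⟩
  · rw [h1]
    simpa using (aux_t (aux_diff hF) q).clm_apply (hasDerivAt_const q.1 ((0, 1) : ℝ × ℝ))
  · rw [h2, hsymm.eq (1, 0) (0, 1)]
    simpa using (aux_s (aux_diff hF) q).clm_apply (hasDerivAt_const q.2 ((1, 0) : ℝ × ℝ))

end helpers

/-- Commutator of the material derivative with the tangential derivative along a moving
regular plane curve: for every smooth scalar `f`,
`𝒟_t(∇_τ f) − ∇_τ(𝒟_t f) = −(∇_τ u · τ)·∇_τ f`, where `u = ∂_tγ`, `σ = ‖∂_sγ‖`,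
`τ = σ⁻¹∂_sγ`, and `∇_τ f = σ⁻¹∂_s f`. -/
theorem commutator_material_tangential (γ : ℝ × ℝ → ℝ × ℝ) (hγ : ContDiff ℝ (⊤ : ℕ∞) γ)
    (σ : ℝ × ℝ → ℝ)
    (hσ : ∀ q, σ q = Real.sqrt ((psd γ q).1 ^ 2 + (psd γ q).2 ^ 2))
    (hσpos : ∀ q, 0 < σ q)
    (τ u : ℝ × ℝ → ℝ × ℝ)
    (hτ : ∀ q, τ q = (σ q)⁻¹ • psd γ q)
    (hu : ∀ q, u q = ptd γ q) :
    ∀ f : ℝ × ℝ → ℝ, ContDiff ℝ (⊤ : ℕ∞) f →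
      ∀ q, ptds (fun q' => (σ q')⁻¹ * psds f q') q - (σ q)⁻¹ * psds (fun q' => ptds f q') q
        = -(dotp ((σ q)⁻¹ • psd u q) (τ q)) * ((σ q)⁻¹ * psds f q) := by
  intro f hf q
  obtain ⟨m, hm1, hm2⟩ := aux_mixed hγ q
  obtain ⟨n, hn1, hn2⟩ := aux_mixed hf q
  have hu' : psd u q = m := by
    have : u = ptd γ := funext hu
    rw [this]
    exact hm2.deriv
  have hf' : psds (fun q' => ptds f q') q = n := hn2.deriv
  have hpos := hσpos q
  have hsq : σ q ^ 2 = (psd γ q).1 ^ 2 + (psd γ q).2 ^ 2 := by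
    rw [hσ q, Real.sq_sqrt (by positivity)]
  have ha : HasDerivAt (fun t => (psd γ (t, q.2)).1) m.1 q.1 :=
    (hasFDerivAt_fst (𝕜 := ℝ) (E := ℝ) (F := ℝ)).comp_hasDerivAt q.1 hm1
  have hb : HasDerivAt (fun t => (psd γ (t, q.2)).2) m.2 q.1 :=
    (hasFDerivAt_snd (𝕜 := ℝ) (E := ℝ) (F := ℝ)).comp_hasDerivAt q.1 hm1
  have hσd : HasDerivAt (fun t => σ (t, q.2))
      (((psd γ q).1 * m.1 + (psd γ q).2 * m.2) / σ q) q.1 := by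
    have h0 : (psd γ (q.1, q.2)).1 ^ 2 + (psd γ (q.1, q.2)).2 ^ 2 ≠ 0 := by
      have : (0 : ℝ) < σ q ^ 2 := by positivity
      exact (hsq ▸ this).ne'
    have h := ((ha.pow 2).add (hb.pow 2)).sqrt h0
    have e : (fun t => σ (t, q.2)) =
        fun t => Real.sqrt ((psd γ (t, q.2)).1 ^ 2 + (psd γ (t, q.2)).2 ^ 2) :=
      funext fun t => hσ _
    rw [e]
    refine h.congr_deriv ?_
    have hs : Real.sqrt ((psd γ q).1 ^ 2 + (psd γ q).2 ^ 2) = σ q := (hσ q).symm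
    simp [hs]
    field_simp
  have hmain := (hσd.inv hpos.ne').mul hn1
  have hL : ptds (fun q' => (σ q')⁻¹ * psds f q') q = _ := hmain.deriv
  rw [hL, hf', hu', hτ q]
  have e2 : deriv (fun s => f (q.1, s)) q.2 = psds f q := rfl
  simp only [dotp, e2, Prod.mk.eta, Prod.smul_fst, Prod.smul_snd, smul_eq_mul, Pi.inv_apply]
  field_simp
  ring
end

section
/- Let γ : ℝ × ℝ → ℝ² be a smooth family of regular plane curves with speed σ(t,s) := ‖∂_s γ(t,s)‖ > 0, unit tangent τ := σ⁻¹∂_sγ, unit normal n := (τ², −τ¹), signed curvature κ := (σ⁻¹∂_s n)·τ, and evolution velocity u := ∂_t γ. Then for all (t,s): ∂_t κ = −n · ( σ⁻¹∂_s( σ⁻¹∂_s u ) ) − 2κ · ( (σ⁻¹∂_s u) · τ ). That is, 𝒟_t κ = −n·∇_τ∇_τ u − 2κ(∇_τ u · τ). -/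
open scoped ContDiff

noncomputable def dT (f : ℝ × ℝ → ℝ) (q : ℝ × ℝ) : ℝ := fderiv ℝ f q (1, 0)
noncomputable def dS (f : ℝ × ℝ → ℝ) (q : ℝ × ℝ) : ℝ := fderiv ℝ f q (0, 1)

lemma dT_smooth {f : ℝ × ℝ → ℝ} (hf : ContDiff ℝ ∞ f) : ContDiff ℝ ∞ (dT f) :=
  (hf.fderiv_right (m := ∞) (by simp)).clm_apply contDiff_const

lemma dS_smooth {f : ℝ × ℝ → ℝ} (hf : ContDiff ℝ ∞ f) : ContDiff ℝ ∞ (dS f) :=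
  (hf.fderiv_right (m := ∞) (by simp)).clm_apply contDiff_const

lemma hasT {f : ℝ × ℝ → ℝ} (hf : ContDiff ℝ ∞ f) (q : ℝ × ℝ) :
    HasDerivAt (fun t => f (t, q.2)) (dT f q) q.1 := by
  have h : HasFDerivAt f (fderiv ℝ f q) (q.1, q.2) :=
    (hf.differentiable (by simp) q).hasFDerivAt
  exact h.comp_hasDerivAt q.1 ((hasDerivAt_id q.1).prodMk (hasDerivAt_const q.1 q.2))

lemma hasS {f : ℝ × ℝ → ℝ} (hf : ContDiff ℝ ∞ f) (q : ℝ × ℝ) :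
    HasDerivAt (fun s => f (q.1, s)) (dS f q) q.2 := by
  have h : HasFDerivAt f (fderiv ℝ f q) (q.1, q.2) :=
    (hf.differentiable (by simp) q).hasFDerivAt
  exact h.comp_hasDerivAt q.2 ((hasDerivAt_const q.2 q.1).prodMk (hasDerivAt_id q.2))

lemma dS_dT {f : ℝ × ℝ → ℝ} (hf : ContDiff ℝ ∞ f) : dS (dT f) = dT (dS f) := by
  funext q
  have hd : DifferentiableAt ℝ (fderiv ℝ f) q :=
    (hf.fderiv_right (m := ∞) (by simp)).differentiable (by simp) q
  have hs : IsSymmSndFDerivAt ℝ f q :=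
    hf.contDiffAt.isSymmSndFDerivAt (by simp; exact WithTop.coe_le_coe.2 le_top)
  have e : ∀ v w : ℝ × ℝ, fderiv ℝ (fun p => fderiv ℝ f p v) q w
      = fderiv ℝ (fderiv ℝ f) q w v := by
    intro v w
    rw [fderiv_clm_apply hd (differentiableAt_const v)]
    simp
  change fderiv ℝ (fun p => fderiv ℝ f p (1, 0)) q (0, 1)
    = fderiv ℝ (fun p => fderiv ℝ f p (0, 1)) q (1, 0)
  rw [e, e]
  exact hs _ _

lemma psd_eq {f g : ℝ × ℝ → ℝ} (hf : ContDiff ℝ ∞ f) (hg : ContDiff ℝ ∞ g) (q : ℝ × ℝ) :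
    psd (fun p => (f p, g p)) q = (dS f q, dS g q) :=
  ((hasS hf q).prodMk (hasS hg q)).deriv

lemma ptd_eq {f g : ℝ × ℝ → ℝ} (hf : ContDiff ℝ ∞ f) (hg : ContDiff ℝ ∞ g) (q : ℝ × ℝ) :
    ptd (fun p => (f p, g p)) q = (dT f q, dT g q) :=
  ((hasT hf q).prodMk (hasT hg q)).deriv

/-- First-order evolution of the signed curvature of a moving regular plane curve:
`𝒟_t κ = −n·∇_τ∇_τ u − 2κ(∇_τ u · τ)`, where `u = ∂_tγ`, `σ = ‖∂_sγ‖`, `τ = σ⁻¹∂_sγ`,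
`n = (τ², −τ¹)`, and `κ = (∇_τ n)·τ`. -/
theorem evolution_of_curvature (γ : ℝ × ℝ → ℝ × ℝ) (hγ : ContDiff ℝ (⊤ : ℕ∞) γ)
    (σ : ℝ × ℝ → ℝ)
    (hσ : ∀ q, σ q = Real.sqrt ((psd γ q).1 ^ 2 + (psd γ q).2 ^ 2))
    (hσpos : ∀ q, 0 < σ q)
    (τ n u : ℝ × ℝ → ℝ × ℝ) (κ : ℝ × ℝ → ℝ)
    (hτ : ∀ q, τ q = (σ q)⁻¹ • psd γ q)
    (hn : ∀ q, n q = ((τ q).2, -(τ q).1))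
    (hκ : ∀ q, κ q = dotp ((σ q)⁻¹ • psd n q) (τ q))
    (hu : ∀ q, u q = ptd γ q) :
    ∀ q, ptds κ q
      = -(dotp (n q) ((σ q)⁻¹ • psd (fun q' => (σ q')⁻¹ • psd u q') q))
        - 2 * κ q * dotp ((σ q)⁻¹ • psd u q) (τ q) := by
  obtain ⟨x, y, hx, hy, rfl⟩ : ∃ x y : ℝ × ℝ → ℝ, ContDiff ℝ ∞ x ∧ ContDiff ℝ ∞ y ∧
      γ = fun p => (x p, y p) :=
    ⟨fun p => (γ p).1, fun p => (γ p).2, hγ.fst, hγ.snd, rfl⟩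
  have ha := dS_smooth hx
  have hb := dS_smooth hy
  have hut : u = fun p => (dT x p, dT y p) := funext fun p => by rw [hu, ptd_eq hx hy]
  have hus : ∀ p, psd u p = (dT (dS x) p, dT (dS y) p) := fun p => by
    rw [hut, psd_eq (dT_smooth hx) (dT_smooth hy), dS_dT hx, dS_dT hy]
  simp only [psd_eq hx hy] at hσ hτ
  generalize dS x = a at *
  generalize dS y = b at *
  have hat := dT_smooth ha
  have hbt := dT_smooth hb
  have hpos : ∀ p, 0 < a p ^ 2 + b p ^ 2 := fun p => by
    have := hσpos p
    rw [hσ] at this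
    exact Real.sqrt_pos.1 this
  have hsq : ∀ p, σ p ^ 2 = a p ^ 2 + b p ^ 2 := fun p => by
    rw [hσ, Real.sq_sqrt (hpos p).le]
  have hne : ∀ p, σ p ≠ 0 := fun p => (hσpos p).ne'
  have hσs : ContDiff ℝ ∞ σ := by
    have : σ = fun p => Real.sqrt (a p ^ 2 + b p ^ 2) := funext hσ
    rw [this]
    exact ((ha.pow 2).add (hb.pow 2)).sqrt fun p => (hpos p).ne'
  have hST : ∀ p, σ p * dT σ p = a p * dT a p + b p * dT b p := fun p => by
    have h1 := (hasT hσs p).pow 2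
    have h2 := ((hasT ha p).pow 2).add ((hasT hb p).pow 2)
    have h3 := h1.unique (h2.congr_of_eventuallyEq (Filter.Eventually.of_forall fun t => by
      simp [hsq]))
    simp at h3
    linarith
  have hSS : ∀ p, σ p * dS σ p = a p * dS a p + b p * dS b p := fun p => by
    have h1 := (hasS hσs p).pow 2
    have h2 := ((hasS ha p).pow 2).add ((hasS hb p).pow 2)
    have h3 := h1.unique (h2.congr_of_eventuallyEq (Filter.Eventually.of_forall fun t => by
      simp [hsq]))
    simp at h3
    linarith
  have hnf : n = fun p => ((σ p)⁻¹ * b p, -((σ p)⁻¹ * a p)) := funext fun p => by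
    rw [hn, hτ]; simp
  have hpn : ∀ p, psd n p = (-dS σ p / σ p ^ 2 * b p + (σ p)⁻¹ * dS b p,
      -(-dS σ p / σ p ^ 2 * a p + (σ p)⁻¹ * dS a p)) := fun p => by
    rw [hnf]
    have hi := (hasS hσs p).inv (hne p)
    exact ((hi.mul (hasS hb p)).prodMk (hi.mul (hasS ha p)).neg).deriv
  have hκf : ∀ p, κ p = (dS b p * a p - dS a p * b p) / σ p ^ 3 := fun p => by
    rw [hκ, hpn, hτ]
    have := hne p
    simp only [dotp, Prod.smul_mk, smul_eq_mul]
    field_simp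
    ring
  have hκt : ∀ p, ptds κ p = ((dT (dS b) p * a p + dS b p * dT a p
      - (dT (dS a) p * b p + dS a p * dT b p)) * σ p ^ 3
      - (dS b p * a p - dS a p * b p) * (3 * σ p ^ 2 * dT σ p)) / (σ p ^ 3) ^ 2 := fun p => by
    have h := ((((hasT (dS_smooth hb) p).mul (hasT ha p)).sub
      ((hasT (dS_smooth ha) p).mul (hasT hb p))).div ((hasT hσs p).pow 3)
      (pow_ne_zero 3 (hne p)))
    have hk : κ = fun p => (dS b p * a p - dS a p * b p) / σ p ^ 3 := funext hκf
    rw [hk]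
    refine Eq.trans h.deriv ?_
    simp
  intro q
  have hpp : psd (fun q' => (σ q')⁻¹ • psd u q') q
      = (-dS σ q / σ q ^ 2 * dT a q + (σ q)⁻¹ * dT (dS a) q,
        -dS σ q / σ q ^ 2 * dT b q + (σ q)⁻¹ * dT (dS b) q) := by
    simp only [hus, Prod.smul_mk, smul_eq_mul]
    have hi := (hasS hσs q).inv (hne q)
    rw [← dS_dT ha, ← dS_dT hb]
    exact ((hi.mul (hasS hat q)).prodMk (hi.mul (hasS hbt q))).deriv
  rw [hκt, hpp, hκf, hus, hτ, hnf]
  have h0 := hne q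
  have h1 := hsq q
  have h2 : dT σ q = (a q * dT a q + b q * dT b q) / σ q := by
    rw [← hST]; field_simp
  have h3 : dS σ q = (a q * dS a q + b q * dS b q) / σ q := by
    rw [← hSS]; field_simp
  rw [h2, h3]
  simp only [dotp, Prod.smul_mk, smul_eq_mul]
  generalize σ q = r at *
  field_simp
  rw [h1]
  ring
end

section
/- Let f : ℝ² → ℝ be C² and let γ : ℝ → ℝ² be a C² regular plane curve with speed σ(s) := ‖γ'(s)‖ > 0, unit tangent τ := σ⁻¹γ', unit normal n := (τ², −τ¹), and signed curvature κ := (σ⁻¹n')·τ. Then for every s: Δf(γ(s)) = σ(s)⁻¹·d/ds[ σ⁻¹·d/ds( f∘γ ) ](s) + (Hess f)(γ(s))[n(s), n(s)] + κ(s)·( ∇f(γ(s)) · n(s) ), where Δf = ∂₁₁f + ∂₂₂f, Hess f is the second derivative bilinear form of f, and ∇f is the gradient of f. That is, the Laplacian restricted to a curve decomposes as Δf = ∇_τ∇_τ f + ∇²f(n,n) + κ∇_n f. -/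
/-- Decomposition of the Laplacian along a regular plane curve: for a `C²` function
`f : ℝ² → ℝ` and a `C²` regular curve `γ` with speed `σ = ‖γ'‖`, unit tangent `τ = σ⁻¹γ'`,
unit normal `n = (τ², −τ¹)`, and signed curvature `κ = (σ⁻¹n')·τ`,
`Δf = ∇_τ∇_τ f + (Hess f)(n,n) + κ·∇_n f` along the curve. -/
theorem laplacian_decomposition_on_curve (f : ℝ × ℝ → ℝ) (hf : ContDiff ℝ 2 f)
    (γ : ℝ → ℝ × ℝ) (hγ : ContDiff ℝ 2 γ)
    (σ : ℝ → ℝ)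
    (hσ : ∀ s, σ s = Real.sqrt ((deriv γ s).1 ^ 2 + (deriv γ s).2 ^ 2))
    (hσpos : ∀ s, 0 < σ s)
    (τ n : ℝ → ℝ × ℝ) (κ : ℝ → ℝ)
    (hτ : ∀ s, τ s = (σ s)⁻¹ • deriv γ s)
    (hn : ∀ s, n s = ((τ s).2, -(τ s).1))
    (hκ : ∀ s, κ s = ((σ s)⁻¹ • deriv n s).1 * (τ s).1 + ((σ s)⁻¹ • deriv n s).2 * (τ s).2) :
    ∀ s,
      fderiv ℝ (fun y => fderiv ℝ f y ((1 : ℝ), (0 : ℝ))) (γ s) ((1 : ℝ), (0 : ℝ))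
        + fderiv ℝ (fun y => fderiv ℝ f y ((0 : ℝ), (1 : ℝ))) (γ s) ((0 : ℝ), (1 : ℝ))
      = (σ s)⁻¹ * deriv (fun s' => (σ s')⁻¹ * deriv (fun s'' => f (γ s'')) s') s
        + fderiv ℝ (fun y => fderiv ℝ f y (n s)) (γ s) (n s)
        + κ s * fderiv ℝ f (γ s) (n s) := by
  intro s
  have hfd : Differentiable ℝ f := hf.differentiable (by norm_num)
  have hf1 : ContDiff ℝ 1 (fderiv ℝ f) := hf.fderiv_right (by norm_num)
  have hf2 : Differentiable ℝ (fderiv ℝ f) := hf1.differentiable (by norm_num)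
  have hγd : Differentiable ℝ γ := hγ.differentiable (by norm_num)
  have hγ1 : ContDiff ℝ 1 (deriv γ) := by
    have h : ContDiff ℝ (1 + 1) γ := by simpa [one_add_one_eq_two] using hγ
    exact (contDiff_succ_iff_deriv.1 h).2.2
  have hγ2 : Differentiable ℝ (deriv γ) := hγ1.differentiable (by norm_num)
  have hsq : ∀ t, (deriv γ t).1 ^ 2 + (deriv γ t).2 ^ 2 = σ t ^ 2 := by
    intro t
    rw [hσ t, Real.sq_sqrt (by positivity)]
  have hσd : Differentiable ℝ σ := by
    have h : σ = fun t => Real.sqrt ((deriv γ t).1 ^ 2 + (deriv γ t).2 ^ 2) := funext hσ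
    intro t
    rw [h]
    refine DifferentiableAt.sqrt ?_ ?_
    · exact ((hγ2 t).fst.pow 2).add ((hγ2 t).snd.pow 2)
    · rw [hsq t]
      exact pow_ne_zero 2 (hσpos t).ne'
  have hτd : Differentiable ℝ τ := by
    have h : τ = fun t => (σ t)⁻¹ • deriv γ t := funext hτ
    rw [h]
    intro t
    exact ((hσd t).inv (hσpos t).ne').smul (hγ2 t)
  have hτs := (hτd s).hasDerivAt
  have hunit : ∀ t, (τ t).1 ^ 2 + (τ t).2 ^ 2 = 1 := by
    intro t
    have h0 := (hσpos t).ne'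
    rw [hτ t]
    simp only [Prod.smul_fst, Prod.smul_snd, smul_eq_mul]
    field_simp
    exact hsq t
  obtain ⟨p, q, hpq⟩ : ∃ p q : ℝ, deriv τ s = (p, q) := ⟨_, _, rfl⟩
  rw [hpq] at hτs
  have h1 : HasDerivAt (fun t => (τ t).1) p s := by
    exact (hasFDerivAt_fst (𝕜 := ℝ) (p := τ s)).comp_hasDerivAt s hτs
  have h2 : HasDerivAt (fun t => (τ t).2) q s := by
    exact (hasFDerivAt_snd (𝕜 := ℝ) (p := τ s)).comp_hasDerivAt s hτs
  have hn' : deriv n s = (q, -p) := by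
    have h : n = fun t => ((τ t).2, -(τ t).1) := funext hn
    rw [h]
    exact (h2.prodMk h1.neg).deriv
  have horth : (τ s).1 * p + (τ s).2 * q = 0 := by
    have h3 := (h1.pow 2).add (h2.pow 2)
    have h4 : HasDerivAt (fun t => (τ t).1 ^ 2 + (τ t).2 ^ 2) 0 s := by
      simp only [hunit]
      exact hasDerivAt_const s (1 : ℝ)
    have h5 := h3.unique h4
    norm_num at h5
    linarith
  have hγs : deriv γ s = σ s • τ s := by
    rw [hτ s, smul_inv_smul₀ (hσpos s).ne']
  have hinner : (fun s' => (σ s')⁻¹ * deriv (fun s'' => f (γ s'')) s')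
      = fun t => fderiv ℝ f (γ t) (τ t) := by
    funext t
    have h : HasDerivAt (fun s'' => f (γ s'')) (fderiv ℝ f (γ t) (deriv γ t)) t :=
      (hfd (γ t)).hasFDerivAt.comp_hasDerivAt t (hγd t).hasDerivAt
    rw [h.deriv, hτ t, map_smul, smul_eq_mul]
  have hB : HasDerivAt (fun t => fderiv ℝ f (γ t))
      (fderiv ℝ (fderiv ℝ f) (γ s) (deriv γ s)) s :=
    (hf2 (γ s)).hasFDerivAt.comp_hasDerivAt s (hγd s).hasDerivAt
  have hconst : ∀ v w : ℝ × ℝ, fderiv ℝ (fun y => fderiv ℝ f y v) (γ s) w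
      = fderiv ℝ (fderiv ℝ f) (γ s) w v := by
    intro v w
    rw [((hf2 (γ s)).hasFDerivAt.clm_apply (hasFDerivAt_const v (γ s))).fderiv]
    simp
  rw [hinner, (hB.clm_apply hτs).deriv, hconst, hconst, hconst, hκ s, hn', hγs, hn s]
  have hu := hunit s
  have h0 := (hσpos s).ne'
  generalize fderiv ℝ (fderiv ℝ f) (γ s) = B
  generalize fderiv ℝ f (γ s) = L
  generalize σ s = r at *
  obtain ⟨a, b, hab⟩ : ∃ a b : ℝ, τ s = (a, b) := ⟨_, _, rfl⟩
  rw [hab] at hu horth ⊢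
  have hdec : ∀ x y : ℝ, ((x, y) : ℝ × ℝ) = x • ((1 : ℝ), (0 : ℝ)) + y • ((0 : ℝ), (1 : ℝ)) := by
    intro x y
    simp
  have hL : ∀ x y : ℝ, L (x, y) = x * L (1, 0) + y * L (0, 1) := by
    intro x y
    rw [hdec x y, map_add, map_smul, map_smul, smul_eq_mul, smul_eq_mul]
  have hBB : ∀ x y z w : ℝ, B (x, y) (z, w) = x * z * B (1, 0) (1, 0) + x * w * B (1, 0) (0, 1)
      + y * z * B (0, 1) (1, 0) + y * w * B (0, 1) (0, 1) := by
    intro x y z w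
    rw [hdec x y, hdec z w]
    simp only [map_add, map_smul, ContinuousLinearMap.add_apply, ContinuousLinearMap.smul_apply,
      smul_eq_mul]
    ring
  simp only [map_smul, ContinuousLinearMap.smul_apply, smul_eq_mul, Prod.smul_fst, Prod.smul_snd]
  simp only at hu horth
  rw [hBB a b a b, hBB b (-a) b (-a), hL p q, hL b (-a)]
  generalize B (1, 0) (1, 0) = b11
  generalize B (0, 1) (0, 1) = b22
  generalize B (1, 0) (0, 1) = b12
  generalize B (0, 1) (1, 0) = b21
  generalize L (1, 0) = l1
  generalize L (0, 1) = l2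
  field_simp
  linear_combination (-(r * (b11 + b22)) + p * l1 + q * l2) * hu - (a * l1 + b * l2) * horth
end

section
/- Let I ⊆ ℝ be an open interval, U ⊆ ℝ² open, and let v, h : I × U → ℝ² be C² and p : I × U → ℝ be C², satisfying the ideal incompressible MHD equations ∂_t v + (v·∇)v + ∇p = (h·∇)h and ∂_t h + (v·∇)h = (h·∇)v on I × U. Define the scalar curls ϖ₊ := Curl(v + h) and ϖ₋ := Curl(v − h), where Curl w := ∂₁w² − ∂₂w¹, and define the bilinear form 𝓑(∂a, ∂b) := Σ_{k=1,2} ( ∂₁a^k·∂_k b² − ∂₂a^k·∂_k b¹ ). Then on I × U: ∂_t ϖ₋ + ((v + h)·∇)ϖ₋ + 𝓑(∂(v+h), ∂(v−h)) = 0 and ∂_t ϖ₊ + ((v − h)·∇)ϖ₊ + 𝓑(∂(v−h), ∂(v+h)) = 0. (Transport equations for the vorticity–current combinations along the Elsässer characteristics.) -/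
/-- The two-dimensional scalar curl `Curl w = ∂₁w² − ∂₂w¹`. -/
noncomputable def curl2 (w : ℝ × ℝ → ℝ × ℝ) (x : ℝ × ℝ) : ℝ :=
  pd1 (fun y => (w y).2) x - pd2 (fun y => (w y).1) x

/-- The bilinear form `𝓑(∂a, ∂b) = Σ_{k=1,2} (∂₁a^k·∂_k b² − ∂₂a^k·∂_k b¹)`. -/
noncomputable def Bform (a b : ℝ × ℝ → ℝ × ℝ) (x : ℝ × ℝ) : ℝ :=
  pd1 (fun y => (a y).1) x * pd1 (fun y => (b y).2) x
    + pd1 (fun y => (a y).2) x * pd2 (fun y => (b y).2) x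
    - pd2 (fun y => (a y).1) x * pd1 (fun y => (b y).1) x
    - pd2 (fun y => (a y).2) x * pd2 (fun y => (b y).1) x

theorem aux_slice_y {G : Type*} [NormedAddCommGroup G] [NormedSpace ℝ G]
    {f : ℝ × (ℝ × ℝ) → G} {t : ℝ} {x : ℝ × ℝ}
    (hf : DifferentiableAt ℝ f (t, x)) (u : ℝ × ℝ) :
    fderiv ℝ (fun y => f (t, y)) x u = fderiv ℝ f (t, x) (0, u) := by
  have h1 : HasFDerivAt (fun y : ℝ × ℝ => (t, y)) (ContinuousLinearMap.inr ℝ ℝ (ℝ × ℝ)) x :=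
    hasFDerivAt_prodMk_right t x
  have h2 := (HasFDerivAt.comp x (f := fun y : ℝ × ℝ => (t, y)) hf.hasFDerivAt h1).fderiv
  have h3 : fderiv ℝ (fun y => f (t, y)) x = _ := h2
  rw [h3]; simp

theorem aux_slice_t {G : Type*} [NormedAddCommGroup G] [NormedSpace ℝ G]
    {f : ℝ × (ℝ × ℝ) → G} {t : ℝ} {x : ℝ × ℝ}
    (hf : DifferentiableAt ℝ f (t, x)) :
    deriv (fun s => f (s, x)) t = fderiv ℝ f (t, x) (1, 0) := by
  have h1 : HasFDerivAt (fun s : ℝ => (s, x)) (ContinuousLinearMap.inl ℝ ℝ (ℝ × ℝ)) t :=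
    hasFDerivAt_prodMk_left t x
  have h2 := (HasFDerivAt.comp t (f := fun s : ℝ => (s, x)) hf.hasFDerivAt h1).fderiv
  have h3 : fderiv ℝ (fun s => f (s, x)) t = _ := h2
  rw [← fderiv_apply_one_eq_deriv, h3]; simp

theorem aux_dd {E : Type*} [NormedAddCommGroup E] [NormedSpace ℝ E]
    {f : E → ℝ} {z : E} (hf : ContDiffAt ℝ 2 f z) (w : E) :
    HasFDerivAt (fun y => fderiv ℝ f y w) ((fderiv ℝ (fderiv ℝ f) z).flip w) z := by
  have h1 : DifferentiableAt ℝ (fderiv ℝ f) z :=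
    (hf.fderiv_right (m := 1) (by norm_num)).differentiableAt (by norm_num)
  have h2 := h1.hasFDerivAt.clm_apply (hasFDerivAt_const w z)
  simpa only [ContinuousLinearMap.comp_zero, zero_add] using h2

theorem aux_symm {E : Type*} [NormedAddCommGroup E] [NormedSpace ℝ E]
    {f : E → ℝ} {z : E} (hf : ContDiffAt ℝ 2 f z) (u w : E) :
    fderiv ℝ (fderiv ℝ f) z u w = fderiv ℝ (fderiv ℝ f) z w u :=
  (hf.isSymmSndFDerivAt (by simp)) u w

theorem aux_diff_eq {E : Type*} [NormedAddCommGroup E] [NormedSpace ℝ E]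
    {S : Set E} (hS : IsOpen S) {F A1 A2 p : E → ℝ} {z : E} (hz : z ∈ S)
    (hF : ContDiffAt ℝ 2 F z) (hA1 : DifferentiableAt ℝ A1 z) (hA2 : DifferentiableAt ℝ A2 z)
    (hp : ContDiffAt ℝ 2 p z) (e0 e1 e2 e : E)
    (heq : ∀ y ∈ S, fderiv ℝ F y e0 + (A1 y * fderiv ℝ F y e1 + A2 y * fderiv ℝ F y e2)
      + fderiv ℝ p y e = 0) (u : E) :
    fderiv ℝ (fderiv ℝ F) z u e0
      + (A1 z * fderiv ℝ (fderiv ℝ F) z u e1 + fderiv ℝ A1 z u * fderiv ℝ F z e1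
      + (A2 z * fderiv ℝ (fderiv ℝ F) z u e2 + fderiv ℝ A2 z u * fderiv ℝ F z e2))
      + fderiv ℝ (fderiv ℝ p) z u e = 0 := by
  have h1 := ((aux_dd hF e0).add ((hA1.hasFDerivAt.mul (aux_dd hF e1)).add
    (hA2.hasFDerivAt.mul (aux_dd hF e2)))).add (aux_dd hp e)
  have h2 : HasFDerivAt (fun _ : E => (0 : ℝ)) (0 : E →L[ℝ] ℝ) z := hasFDerivAt_const _ _
  have h3 := h2.congr_of_eventuallyEq (f₁ := fun y => fderiv ℝ F y e0 + (A1 y * fderiv ℝ F y e1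
      + A2 y * fderiv ℝ F y e2) + fderiv ℝ p y e)
    (by filter_upwards [hS.mem_nhds hz] with y hy using heq y hy)
  have h4 := congrArg (fun L : E →L[ℝ] ℝ => L u) (HasFDerivAt.unique h1 h3)
  simp at h4
  linarith

theorem aux_split (L : ℝ × (ℝ × ℝ) →L[ℝ] ℝ) (u : ℝ × ℝ) :
    L (0, u) = u.1 * L (0, (1, 0)) + u.2 * L (0, (0, 1)) := by
  have : ((0 : ℝ), u) = u.1 • ((0 : ℝ), ((1 : ℝ), (0 : ℝ)))
      + u.2 • ((0 : ℝ), ((0 : ℝ), (1 : ℝ))) := by ext <;> simp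
  rw [this, map_add, map_smul, map_smul]; simp

theorem aux_main
    (I : Set ℝ) (hIopen : IsOpen I) (U : Set (ℝ × ℝ)) (hU : IsOpen U)
    (a b : ℝ × (ℝ × ℝ) → ℝ × ℝ) (p : ℝ × (ℝ × ℝ) → ℝ)
    (ha : ContDiffOn ℝ 2 a (I ×ˢ U))
    (hb : ContDiffOn ℝ 2 b (I ×ˢ U))
    (hp : ContDiffOn ℝ 2 p (I ×ˢ U))
    (heq : ∀ t ∈ I, ∀ x ∈ U,
      fderiv ℝ b (t, x) (1, 0) + fderiv ℝ b (t, x) (0, a (t, x))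
        + (fderiv ℝ p (t, x) (0, (1, 0)), fderiv ℝ p (t, x) (0, (0, 1))) = 0)
    (w : ℝ × (ℝ × ℝ) → ℝ)
    (hw : ∀ t ∈ I, ∀ x ∈ U, w (t, x) = curl2 (fun y => b (t, y)) x) :
    ∀ t ∈ I, ∀ x ∈ U,
      deriv (fun t' => w (t', x)) t
        + fderiv ℝ (fun y => w (t, y)) x (a (t, x))
        + Bform (fun y => a (t, y)) (fun y => b (t, y)) x = 0 := by
  intro t ht x hx
  have hS : IsOpen (I ×ˢ U) := hIopen.prod hU
  have hz : (t, x) ∈ I ×ˢ U := ⟨ht, hx⟩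
  have cb1 : ∀ z ∈ I ×ˢ U, ContDiffAt ℝ 2 (fun z => (b z).1) z := fun z hz =>
    (hb.contDiffAt (hS.mem_nhds hz)).fst
  have cb2 : ∀ z ∈ I ×ˢ U, ContDiffAt ℝ 2 (fun z => (b z).2) z := fun z hz =>
    (hb.contDiffAt (hS.mem_nhds hz)).snd
  have ca1 : ContDiffAt ℝ 2 (fun z => (a z).1) (t, x) := (ha.contDiffAt (hS.mem_nhds hz)).fst
  have ca2 : ContDiffAt ℝ 2 (fun z => (a z).2) (t, x) := (ha.contDiffAt (hS.mem_nhds hz)).snd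
  have cp : ContDiffAt ℝ 2 p (t, x) := hp.contDiffAt (hS.mem_nhds hz)
  have db1 := fun z hz => (cb1 z hz).differentiableAt (by norm_num)
  have db2 := fun z hz => (cb2 z hz).differentiableAt (by norm_num)
  have da1 := ca1.differentiableAt (by norm_num)
  have da2 := ca2.differentiableAt (by norm_num)
  have f1 : ∀ z ∈ I ×ˢ U, ∀ u, fderiv ℝ (fun z => (b z).1) z u = (fderiv ℝ b z u).1 := by
    intro z hz u
    have hd := (hb.contDiffAt (hS.mem_nhds hz)).differentiableAt (by norm_num)
    rw [hd.hasFDerivAt.fst.fderiv]; rfl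
  have f2 : ∀ z ∈ I ×ˢ U, ∀ u, fderiv ℝ (fun z => (b z).2) z u = (fderiv ℝ b z u).2 := by
    intro z hz u
    have hd := (hb.contDiffAt (hS.mem_nhds hz)).differentiableAt (by norm_num)
    rw [hd.hasFDerivAt.snd.fderiv]; rfl
  have E1 := aux_diff_eq hS hz (cb1 _ hz) da1 da2 cp (1, 0) (0, (1, 0)) (0, (0, 1)) (0, (1, 0))
    (by
      intro y hy
      rw [← aux_split, f1 y hy, f1 y hy]
      exact congrArg Prod.fst (heq y.1 hy.1 y.2 hy.2)) (0, (0, 1))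
  have E2 := aux_diff_eq hS hz (cb2 _ hz) da1 da2 cp (1, 0) (0, (1, 0)) (0, (0, 1)) (0, (0, 1))
    (by
      intro y hy
      rw [← aux_split, f2 y hy, f2 y hy]
      exact congrArg Prod.snd (heq y.1 hy.1 y.2 hy.2)) (0, (1, 0))
  have hW : HasFDerivAt w _ (t, x) :=
    ((aux_dd (cb2 _ hz) (0, (1, 0))).sub (aux_dd (cb1 _ hz) (0, (0, 1)))).congr_of_eventuallyEq
      (by
        filter_upwards [hS.mem_nhds hz] with y hy
        have h1 := hw y.1 hy.1 y.2 hy.2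
        simp only [curl2, pd1, pd2] at h1
        rw [aux_slice_y (f := fun z => (b z).2) (db2 y hy),
          aux_slice_y (f := fun z => (b z).1) (db1 y hy)] at h1
        exact h1)
  rw [aux_slice_t hW.differentiableAt, aux_slice_y hW.differentiableAt, aux_split, hW.fderiv]
  simp only [Bform, pd1, pd2]
  rw [aux_slice_y (f := fun z => (b z).2) (db2 _ hz), aux_slice_y (f := fun z => (b z).2) (db2 _ hz),
    aux_slice_y (f := fun z => (b z).1) (db1 _ hz), aux_slice_y (f := fun z => (b z).1) (db1 _ hz),
    aux_slice_y (f := fun z => (a z).1) da1, aux_slice_y (f := fun z => (a z).1) da1,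
    aux_slice_y (f := fun z => (a z).2) da2, aux_slice_y (f := fun z => (a z).2) da2]
  simp only [ContinuousLinearMap.sub_apply, ContinuousLinearMap.flip_apply]
  have s1 := aux_symm (cb1 _ hz) (0, (0, 1)) (1, 0)
  have s2 := aux_symm (cb1 _ hz) (0, (0, 1)) (0, (1, 0))
  have s3 := aux_symm (cb2 _ hz) (0, (1, 0)) (1, 0)
  have s4 := aux_symm (cb2 _ hz) (0, (1, 0)) (0, (0, 1))
  have s5 := aux_symm cp (0, (1, 0)) (0, (0, 1))
  rw [s1, s2] at E1
  rw [s3, s4, s5] at E2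
  linear_combination E2 - E1

/-- Transport equations for the vorticity–current combinations `ϖ± = Curl(v ± h)` along the
Elsässer characteristics: for `C²` solutions of ideal incompressible 2D MHD on `I × U`,
`∂_t ϖ₋ + ((v+h)·∇)ϖ₋ + 𝓑(∂(v+h), ∂(v−h)) = 0` and
`∂_t ϖ₊ + ((v−h)·∇)ϖ₊ + 𝓑(∂(v−h), ∂(v+h)) = 0`. -/
theorem transport_of_vorticity_current
    (I : Set ℝ) (hIopen : IsOpen I) (hIinterval : I.OrdConnected)
    (U : Set (ℝ × ℝ)) (hU : IsOpen U)
    (v h : ℝ × (ℝ × ℝ) → ℝ × ℝ) (p : ℝ × (ℝ × ℝ) → ℝ)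
    (hv : ContDiffOn ℝ 2 v (I ×ˢ U))
    (hh : ContDiffOn ℝ 2 h (I ×ˢ U))
    (hp : ContDiffOn ℝ 2 p (I ×ˢ U))
    (hMHD1 : ∀ t ∈ I, ∀ x ∈ U,
      deriv (fun t' => v (t', x)) t
        + fderiv ℝ (fun y => v (t, y)) x (v (t, x))
        + (pd1 (fun y => p (t, y)) x, pd2 (fun y => p (t, y)) x)
        = fderiv ℝ (fun y => h (t, y)) x (h (t, x)))
    (hMHD2 : ∀ t ∈ I, ∀ x ∈ U,
      deriv (fun t' => h (t', x)) t + fderiv ℝ (fun y => h (t, y)) x (v (t, x))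
        = fderiv ℝ (fun y => v (t, y)) x (h (t, x)))
    (ϖp ϖm : ℝ × (ℝ × ℝ) → ℝ)
    (hϖp : ∀ t ∈ I, ∀ x ∈ U, ϖp (t, x) = curl2 (fun y => v (t, y) + h (t, y)) x)
    (hϖm : ∀ t ∈ I, ∀ x ∈ U, ϖm (t, x) = curl2 (fun y => v (t, y) - h (t, y)) x) :
    (∀ t ∈ I, ∀ x ∈ U,
      deriv (fun t' => ϖm (t', x)) t
        + fderiv ℝ (fun y => ϖm (t, y)) x (v (t, x) + h (t, x))
        + Bform (fun y => v (t, y) + h (t, y)) (fun y => v (t, y) - h (t, y)) x = 0) ∧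
    (∀ t ∈ I, ∀ x ∈ U,
      deriv (fun t' => ϖp (t', x)) t
        + fderiv ℝ (fun y => ϖp (t, y)) x (v (t, x) - h (t, x))
        + Bform (fun y => v (t, y) - h (t, y)) (fun y => v (t, y) + h (t, y)) x = 0) := by
  have hS : IsOpen (I ×ˢ U) := hIopen.prod hU
  have key : ∀ t ∈ I, ∀ x ∈ U,
      fderiv ℝ v (t, x) (1, 0) + fderiv ℝ v (t, x) (0, v (t, x))
        + (fderiv ℝ p (t, x) (0, (1, 0)), fderiv ℝ p (t, x) (0, (0, 1)))
        = fderiv ℝ h (t, x) (0, h (t, x)) ∧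
      fderiv ℝ h (t, x) (1, 0) + fderiv ℝ h (t, x) (0, v (t, x))
        = fderiv ℝ v (t, x) (0, h (t, x)) := by
    intro t ht x hx
    have hn := hS.mem_nhds (show (t, x) ∈ I ×ˢ U from ⟨ht, hx⟩)
    have dv := (hv.contDiffAt hn).differentiableAt (by norm_num)
    have dh := (hh.contDiffAt hn).differentiableAt (by norm_num)
    have dp := (hp.contDiffAt hn).differentiableAt (by norm_num)
    have h1 := hMHD1 t ht x hx
    have h2 := hMHD2 t ht x hx
    simp only [pd1, pd2] at h1
    rw [aux_slice_t dv, aux_slice_y dv, aux_slice_y dh, aux_slice_y dp, aux_slice_y dp] at h1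
    rw [aux_slice_t dh, aux_slice_y dv, aux_slice_y dh] at h2
    exact ⟨h1, h2⟩
  have hadd : ∀ a b : ℝ × ℝ, ((0 : ℝ), a + b) = (0, a) + (0, b) := by intro a b; simp
  have hsub : ∀ a b : ℝ × ℝ, ((0 : ℝ), a - b) = (0, a) - (0, b) := by intro a b; simp
  constructor
  · refine aux_main I hIopen U hU (fun z => v z + h z) (fun z => v z - h z) p (hv.add hh)
      (hv.sub hh) hp ?_ ϖm hϖm
    intro t ht x hx
    have hn := hS.mem_nhds (show (t, x) ∈ I ×ˢ U from ⟨ht, hx⟩)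
    have dv := (hv.contDiffAt hn).differentiableAt (by norm_num)
    have dh := (hh.contDiffAt hn).differentiableAt (by norm_num)
    obtain ⟨h1, h2⟩ := key t ht x hx
    rw [fderiv_fun_sub dv dh, hadd, map_add]
    simp only [ContinuousLinearMap.sub_apply]
    linear_combination h1 - h2
  · refine aux_main I hIopen U hU (fun z => v z - h z) (fun z => v z + h z) p (hv.sub hh)
      (hv.add hh) hp ?_ ϖp hϖp
    intro t ht x hx
    have hn := hS.mem_nhds (show (t, x) ∈ I ×ˢ U from ⟨ht, hx⟩)
    have dv := (hv.contDiffAt hn).differentiableAt (by norm_num)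
    have dh := (hh.contDiffAt hn).differentiableAt (by norm_num)
    obtain ⟨h1, h2⟩ := key t ht x hx
    rw [fderiv_fun_add dv dh, hsub, map_sub]
    simp only [ContinuousLinearMap.add_apply]
    linear_combination h1 + h2
end

section
/- Let γ : ℝ → ℝ² be a C² regular plane curve with speed σ(s) := ‖γ'(s)‖ > 0, unit tangent τ := σ⁻¹γ', unit normal n := (τ², −τ¹), and signed curvature κ := (σ⁻¹n')·τ. Let H : ℝ² → ℝ² be a C¹ vector field that is curl-free, i.e. ∂₁H² − ∂₂H¹ = 0 on ℝ², and tangential along the curve, i.e. H(γ(s))·n(s) = 0 for all s. Then for every s: n(s) · ∇(½‖H‖²)(γ(s)) = −κ(s)·‖H(γ(s))‖², where ∇(½‖H‖²) denotes the gradient of the scalar function x ↦ ½‖H(x)‖². Equivalently, since Curl H = 0 gives ∇(½|H|²) = (H·∇)H, one has n·((H·∇)H)(γ(s)) = −κ(s)|H(γ(s))|². -/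
/-- Normal derivative of the magnetic pressure on an interface: if `H : ℝ² → ℝ²` is a `C¹`
curl-free vector field which is tangential along a `C²` regular plane curve `γ` (with speed
`σ = ‖γ'‖`, unit tangent `τ = σ⁻¹γ'`, unit normal `n = (τ², −τ¹)`, and signed curvature
`κ = (σ⁻¹n')·τ`), then along the curve `n·∇(½|H|²) = −κ|H|²`, and equivalently
`n·((H·∇)H) = −κ|H|²`. -/
theorem normal_derivative_magnetic_pressure (γ : ℝ → ℝ × ℝ) (hγ : ContDiff ℝ 2 γ)
    (σ : ℝ → ℝ)
    (hσ : ∀ s, σ s = Real.sqrt ((deriv γ s).1 ^ 2 + (deriv γ s).2 ^ 2))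
    (hσpos : ∀ s, 0 < σ s)
    (τ n : ℝ → ℝ × ℝ) (κ : ℝ → ℝ)
    (hτ : ∀ s, τ s = (σ s)⁻¹ • deriv γ s)
    (hn : ∀ s, n s = ((τ s).2, -(τ s).1))
    (hκ : ∀ s, κ s = ((σ s)⁻¹ • deriv n s).1 * (τ s).1 + ((σ s)⁻¹ • deriv n s).2 * (τ s).2)
    (H : ℝ × ℝ → ℝ × ℝ) (hH : ContDiff ℝ 1 H)
    (hcurl : ∀ x : ℝ × ℝ,
      fderiv ℝ (fun y => (H y).2) x ((1 : ℝ), (0 : ℝ))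
        - fderiv ℝ (fun y => (H y).1) x ((0 : ℝ), (1 : ℝ)) = 0)
    (htang : ∀ s, (H (γ s)).1 * (n s).1 + (H (γ s)).2 * (n s).2 = 0) :
    ∀ s,
      fderiv ℝ (fun y => ((H y).1 ^ 2 + (H y).2 ^ 2) / 2) (γ s) (n s)
          = -(κ s) * ((H (γ s)).1 ^ 2 + (H (γ s)).2 ^ 2) ∧
      (fderiv ℝ H (γ s) (H (γ s))).1 * (n s).1 + (fderiv ℝ H (γ s) (H (γ s))).2 * (n s).2
          = -(κ s) * ((H (γ s)).1 ^ 2 + (H (γ s)).2 ^ 2) := by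
  intro s
  have hγ1 : DifferentiableAt ℝ γ s := (hγ.differentiable (by norm_num)) s
  have hγ2 : DifferentiableAt ℝ (deriv γ) s := by
    have h : ContDiff ℝ 1 (deriv γ) := by
      have h2 : ContDiff ℝ (1 + 1) γ := by
        rw [one_add_one_eq_two]; exact hγ
      exact (contDiff_succ_iff_deriv.mp h2).2.2
    exact (h.differentiable (by norm_num)) s
  have hHd : DifferentiableAt ℝ H (γ s) := (hH.differentiable (by norm_num)) (γ s)
  have hsp : 0 < (deriv γ s).1 ^ 2 + (deriv γ s).2 ^ 2 := by
    have h := hσpos s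
    rw [hσ s] at h
    exact Real.sqrt_pos.mp h
  have hσd : DifferentiableAt ℝ σ s := by
    have e : σ = fun s => Real.sqrt ((deriv γ s).1 ^ 2 + (deriv γ s).2 ^ 2) := funext hσ
    rw [e]
    exact DifferentiableAt.sqrt ((hγ2.fst.pow 2).add (hγ2.snd.pow 2)) hsp.ne'
  have hτd : DifferentiableAt ℝ τ s := by
    have e : τ = fun s => (σ s)⁻¹ • deriv γ s := funext hτ
    rw [e]
    exact (hσd.inv (hσpos s).ne').smul hγ2
  have hnd : DifferentiableAt ℝ n s := by
    have e : n = fun s => ((τ s).2, -(τ s).1) := funext hn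
    rw [e]
    exact hτd.snd.prodMk hτd.fst.neg
  have hn' := hnd.hasDerivAt
  have hHγ : HasDerivAt (fun s => H (γ s)) (fderiv ℝ H (γ s) (deriv γ s)) s :=
    hHd.hasFDerivAt.comp_hasDerivAt s hγ1.hasDerivAt
  have n1 : HasDerivAt (fun s => (n s).1) (deriv n s).1 s := hn'.fst
  have n2 : HasDerivAt (fun s => (n s).2) (deriv n s).2 s := hn'.snd
  have H1 : HasDerivAt (fun s => (H (γ s)).1) (fderiv ℝ H (γ s) (deriv γ s)).1 s := hHγ.fst
  have H2 : HasDerivAt (fun s => (H (γ s)).2) (fderiv ℝ H (γ s) (deriv γ s)).2 s := hHγ.snd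
  have key := (H1.mul n1).add (H2.mul n2)
  have key2 := key.unique ((hasDerivAt_const s (0 : ℝ)).congr_of_eventuallyEq
    (Filter.Eventually.of_forall fun t => htang t))
  have f1 : HasFDerivAt (fun y => (H y).1)
      ((ContinuousLinearMap.fst ℝ ℝ ℝ).comp (fderiv ℝ H (γ s))) (γ s) := hHd.hasFDerivAt.fst
  have f2 : HasFDerivAt (fun y => (H y).2)
      ((ContinuousLinearMap.snd ℝ ℝ ℝ).comp (fderiv ℝ H (γ s))) (γ s) := hHd.hasFDerivAt.snd
  have hc := hcurl (γ s)
  rw [f1.fderiv, f2.fderiv] at hc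
  have fp : HasFDerivAt (fun y => ((H y).1 ^ 2 + (H y).2 ^ 2) / 2)
      ((H (γ s)).1 • ((ContinuousLinearMap.fst ℝ ℝ ℝ).comp (fderiv ℝ H (γ s)))
        + (H (γ s)).2 • ((ContinuousLinearMap.snd ℝ ℝ ℝ).comp (fderiv ℝ H (γ s)))) (γ s) := by
    have h := ((f1.mul f1).add (f2.mul f2)).mul_const (1 / 2 : ℝ)
    have e : (fun y => ((H y).1 ^ 2 + (H y).2 ^ 2) / 2) = fun y =>
        (((fun y => (H y).1) * fun y => (H y).1) + (fun y => (H y).2) * fun y => (H y).2) y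
          * (1 / 2 : ℝ) := by
      funext y
      simp only [Pi.add_apply, Pi.mul_apply]
      ring
    rw [e]
    refine h.congr_fderiv ?_
    module
  rw [fp.fderiv]
  have lin : ∀ v : ℝ × ℝ, fderiv ℝ H (γ s) v
      = v.1 • fderiv ℝ H (γ s) (1, 0) + v.2 • fderiv ℝ H (γ s) (0, 1) := by
    intro v
    rw [← map_smul, ← map_smul, ← map_add]
    simp
  have hg : deriv γ s = σ s • τ s := by
    rw [hτ s, smul_smul, mul_inv_cancel₀ (hσpos s).ne', one_smul]
  have hσ2 : σ s ^ 2 = (deriv γ s).1 ^ 2 + (deriv γ s).2 ^ 2 := by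
    rw [hσ s, Real.sq_sqrt hsp.le]
  have ht := htang s
  have hk := hκ s
  have hs := hσpos s
  have hns := hn s
  rw [lin (deriv γ s)] at key2
  rw [hg] at key2 hσ2
  simp only [add_apply, smul_apply,
    ContinuousLinearMap.comp_apply, ContinuousLinearMap.coe_fst', ContinuousLinearMap.coe_snd']
    at hc ⊢
  rw [lin (n s), lin (H (γ s))]
  rw [hns] at ht key2 ⊢
  simp only [Prod.fst_add, Prod.snd_add, Prod.smul_fst, Prod.smul_snd, smul_eq_mul] at *
  generalize fderiv ℝ H (γ s) (1, 0) = A at *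
  generalize fderiv ℝ H (γ s) (0, 1) = B at *
  generalize deriv n s = N at *
  generalize H (γ s) = h at *
  generalize τ s = t at *
  generalize κ s = k at *
  generalize σ s = r at *
  obtain ⟨a, c⟩ := A
  obtain ⟨b, d⟩ := B
  obtain ⟨N1, N2⟩ := N
  obtain ⟨h1, h2⟩ := h
  obtain ⟨t1, t2⟩ := t
  simp only at *
  have hcb : c = b := by linarith
  subst hcb
  have hunit : t1 ^ 2 + t2 ^ 2 = 1 := by
    have : r ^ 2 * (t1 ^ 2 + t2 ^ 2) = r ^ 2 * 1 := by linarith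
    exact mul_left_cancel₀ (pow_pos hs 2).ne' this
  obtain ⟨m, rfl, rfl⟩ : ∃ m, h1 = m * t1 ∧ h2 = m * t2 :=
    ⟨h1 * t1 + h2 * t2, by linear_combination (-h1) * hunit + t2 * ht,
      by linear_combination (-h2) * hunit - t1 * ht⟩
  have hrk : r * k = N1 * t1 + N2 * t2 := by
    rw [hk]; field_simp
  have main : m * ((t1 * a + t2 * c) * t2 - (t1 * c + t2 * d) * t1) = -k * m ^ 2 := by
    apply mul_left_cancel₀ hs.ne'
    linear_combination m * key2 + m ^ 2 * hrk
  constructor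
  · linear_combination main + k * m ^ 2 * hunit
  · linear_combination main + k * m ^ 2 * hunit
end
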